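/- arXiv:1907.09152 — 4 statements merged into one kernel-verified Lean document; each statement's English description precedes it below -/
import Mathlib

section
/- For any positive integers k, l, m, n, the Toeplitz graph on vertex set {1,…,n} with edges { ij : (|i−j| mod (k+l+m)) ∈ {k+1, k+2, …, k+l} } is word-representable. -/
/-- Two letters `x` and `y` alternate in the word `w` if, after deleting all
letters other than `x` and `y`, consecutive letters always differ
(i.e. the restriction has the form `xyxy⋯` or `yxyx⋯`). -/
def Alternates {V : Type*} [DecidableEq V] (w : List V) (x y : V) : Prop :=
  (w.filter (fun z => z = x || z = y)).Chain' (· ≠ ·)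

/-- A word `w` represents the graph `G`: every vertex occurs in `w`, and two
distinct letters alternate in `w` iff they are adjacent in `G`. -/
def Represents {V : Type*} [DecidableEq V] (w : List V) (G : SimpleGraph V) : Prop :=
  (∀ v, v ∈ w) ∧ ∀ x y : V, x ≠ y → (Alternates w x y ↔ G.Adj x y)

/-- A graph is word-representable if some word represents it. -/
def WordRepresentable {V : Type*} [DecidableEq V] (G : SimpleGraph V) : Prop :=
  ∃ w : List V, Represents w G

theorem alternates_iff_isChain {V : Type*} [DecidableEq V] (w : List V) (x y : V) :
    Alternates w x y ↔ (w.filter (fun z => z = x || z = y)).IsChain (· ≠ ·) :=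
  Iff.rfl

theorem alternates_comm {V : Type*} [DecidableEq V] (w : List V) (x y : V) :
    Alternates w x y ↔ Alternates w y x := by
  simp only [Alternates, Bool.or_comm]

theorem Alternates.of_infix {V : Type*} [DecidableEq V] {w w' : List V} {x y : V}
    (h : w' <:+: w) (hw : Alternates w x y) : Alternates w' x y :=
  List.IsChain.infix hw (h.filter _)

/-- A nodup list containing two distinct letters restricts to one of their two arrangements. -/
theorem filter_pair_of_nodup {V : Type*} [DecidableEq V] {t : List V} (ht : t.Nodup)
    {x y : V} (hx : x ∈ t) (hy : y ∈ t) (hxy : x ≠ y) :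
    t.filter (fun z => z = x || z = y) = [x, y] ∨
      t.filter (fun z => z = x || z = y) = [y, x] := by
  have hp : (t.filter (fun z => z = x || z = y)).Perm [x, y] := by
    rw [List.perm_ext_iff_of_nodup (ht.filter _) (by simpa using hxy)]
    intro a
    simp only [List.mem_filter, Bool.or_eq_true, decide_eq_true_eq, List.mem_cons,
      List.not_mem_nil, or_false]
    constructor
    · exact fun h => h.2
    · rintro (rfl | rfl) <;> simp [hx, hy]
  exact List.perm_pair.mp hp

/-- A finite partial order has a linear extension, given here as a list. -/
theorem exists_linear_extension_list {V : Type*} [Fintype V] (r : V → V → Prop)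
    [IsPartialOrder V r] :
    ∃ t : List V, t.Nodup ∧ (∀ v, v ∈ t) ∧ t.Pairwise (fun a b => ¬ r b a) := by
  classical
  obtain ⟨s, hs, hrs⟩ := extend_partialOrder r
  refine ⟨Finset.univ.sort s, Finset.sort_nodup _ _, by simp, ?_⟩
  have h1 := Finset.pairwise_sort (Finset.univ : Finset V) s
  have h2 : (Finset.univ.sort s).Pairwise (· ≠ ·) := Finset.sort_nodup _ _
  exact (h1.and h2).imp fun h hr => h.2 (antisymm_of s h.1 (hrs _ _ hr))

theorem filter_pair_of_pairwise {V : Type*} [DecidableEq V] {r : V → V → Prop} {t : List V}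
    (ht : t.Nodup) (hmem : ∀ v, v ∈ t) (hpw : t.Pairwise (fun a b => ¬ r b a))
    {x y : V} (hxy : x ≠ y) (hr : r x y) :
    t.filter (fun z => z = x || z = y) = [x, y] := by
  refine (filter_pair_of_nodup ht (hmem x) (hmem y) hxy).resolve_right fun h => ?_
  have := hpw.filter (fun z => decide (z = x) || decide (z = y))
  rw [h] at this
  simp [hr] at this

theorem filter_flatten_isChain {V : Type*} {u v : V} (huv : u ≠ v) (p : V → Bool)
    (L : List (List V)) (hL : ∀ w ∈ L, w.filter p = [u, v, u, v]) :
    (L.flatten.filter p).IsChain (· ≠ ·) ∧ ∀ a ∈ (L.flatten.filter p).head?, a = u := by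
  induction L with
  | nil => simp
  | cons w L ih =>
    obtain ⟨h1, h2⟩ := ih fun w' hw' => hL w' (List.mem_cons_of_mem _ hw')
    rw [List.flatten_cons, List.filter_append, hL w List.mem_cons_self]
    refine ⟨List.IsChain.append (by simp [huv, huv.symm]) h1 ?_, by simp⟩
    intro a ha b hb
    rw [h2 b hb]
    simp only [List.getLast?_cons_cons, List.getLast?_singleton, Option.mem_def,
      Option.some.injEq] at ha
    exact ha ▸ huv.symm

/-- For a non-adjacent pair, there is a word in which every edge `u → v` restricts to `uvuv`
while the given pair does not alternate. -/
theorem exists_word_separating {V : Type*} [DecidableEq V] (G : SimpleGraph V)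
    (r : V → V → Prop) [IsPartialOrder V r]
    (hint : ∀ u v x y, G.Adj u v → r u x → r x y → r y v → x ≠ y → G.Adj x y)
    {t : List V} (ht : t.Nodup) (hmem : ∀ v, v ∈ t) (hpw : t.Pairwise (fun a b => ¬ r b a))
    {x y : V} (hxy : x ≠ y) (hadj : ¬ G.Adj x y) :
    ∃ w : List V, (∀ u v, G.Adj u v → r u v → w.filter (fun z => z = u || z = v) = [u, v, u, v]) ∧
      ¬ Alternates w x y := by
  classical
  have hpair : ∀ u v, G.Adj u v → r u v → t.filter (fun z => z = u || z = v) = [u, v] :=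
    fun u v h hr => filter_pair_of_pairwise ht hmem hpw h.ne hr
  have hcomm : ∀ (p q : V → Bool), (t.filter p).filter q = (t.filter q).filter p :=
    fun p q => List.filter_comm ..
  wlog hyx : ¬ r y x generalizing x y
  · have hyx' : r y x := not_not.mp hyx
    obtain ⟨w, h1, h2⟩ := this hxy.symm (fun h => hadj h.symm)
      fun h => hxy (antisymm_of r h hyx')
    exact ⟨w, h1, fun h => h2 ((alternates_comm _ _ _).mp h)⟩
  by_cases hr : r x y
  · obtain ⟨D, hxD, hDr, hDadj, hDup⟩ : ∃ D : V → Prop, ¬ D x ∧ (∀ v, r y v → D v) ∧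
        (∀ u v, G.Adj u v → r u v → r y v → D u) ∧ (∀ u v, r u v → D u → D v) := by
      refine ⟨fun w => ∃ u v, r y v ∧ (u = v ∨ (G.Adj u v ∧ r u v)) ∧ r u w, ?_,
        fun v h => ⟨v, v, h, Or.inl rfl, refl_of r v⟩,
        fun u v h hr hy => ⟨u, v, hy, Or.inr ⟨h, hr⟩, refl_of r u⟩,
        fun u v h ⟨a, b, h1, h2, h3⟩ => ⟨a, b, h1, h2, trans_of r h3 h⟩⟩
      rintro ⟨u, v, hyv, rfl | ⟨huv, -⟩, hux⟩
      · exact hyx (trans_of r hyv hux)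
      · exact hadj (hint u v x y huv hux hr hyv hxy)
    have hyD : D y := hDr y (refl_of r y)
    refine ⟨t.filter (fun z => ¬ r y z) ++ t.filter (fun z => ¬ D z) ++ t.filter (fun z => r y z) ++
      t.filter (fun z => D z), ?_, ?_⟩
    · intro u v huv hruv
      have c1 : r y u → r y v := fun h => trans_of r h hruv
      have c2 : r y v → D u := hDadj u v huv hruv
      have c3 : D u → D v := hDup u v hruv
      have c4 : r y u → D u := hDr u
      have c5 : r y v → D v := hDr v
      clear hDr hDadj hDup hint hxD
      simp only [List.filter_append]
      rw [hcomm, hcomm (fun z => decide (¬ D z)), hcomm (fun z => decide (r y z)),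
        hcomm (fun z => decide (D z)), hpair u v huv hruv]
      by_cases a1 : r y u <;> by_cases a2 : r y v <;> by_cases a3 : D u <;> by_cases a4 : D v <;>
        simp_all
    · simp only [alternates_iff_isChain, List.filter_append]
      rw [hcomm, hcomm (fun z => decide (¬ D z)), hcomm (fun z => decide (r y z)),
        hcomm (fun z => decide (D z)), filter_pair_of_pairwise ht hmem hpw hxy hr]
      simp [hyx, hxD, hyD, refl_of r y]
  · refine ⟨t.filter (fun z => ¬ r x z) ++ t.filter (fun z => r x z) ++
      t.filter (fun z => ¬ r y z) ++ t.filter (fun z => r y z), ?_, ?_⟩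
    · intro u v huv hruv
      have c1 : r y u → r y v := fun h => trans_of r h hruv
      have c2 : r x u → r x v := fun h => trans_of r h hruv
      simp only [List.filter_append]
      rw [hcomm, hcomm (fun z => decide (r x z)), hcomm (fun z => decide (¬ r y z)),
        hcomm (fun z => decide (r y z)), hpair u v huv hruv]
      by_cases a1 : r y u <;> by_cases a2 : r y v <;> by_cases a3 : r x u <;>
        by_cases a4 : r x v <;> simp_all
    · simp only [alternates_iff_isChain, List.filter_append]
      rw [hcomm, hcomm (fun z => decide (r x z)), hcomm (fun z => decide (¬ r y z)),
        hcomm (fun z => decide (r y z))]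
      rcases filter_pair_of_nodup ht (hmem x) (hmem y) hxy with h | h <;> rw [h] <;>
        simp [hyx, hr, refl_of r x, refl_of r y]

/-- If adjacent vertices are comparable in a partial order, and comparable vertices lying between
the ends of an edge are adjacent, then the graph is word-representable. -/
theorem wordRepresentable_of_isPartialOrder {V : Type*} [Fintype V] [DecidableEq V]
    (G : SimpleGraph V) (r : V → V → Prop) [IsPartialOrder V r]
    (hcmp : ∀ u v, G.Adj u v → r u v ∨ r v u)
    (hint : ∀ u v x y, G.Adj u v → r u x → r x y → r y v → x ≠ y → G.Adj x y) :
    WordRepresentable G := by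
  obtain ⟨t, ht, hmem, hpw⟩ := exists_linear_extension_list r
  have key : ∀ p : V × V, ∃ w : List V,
      (∀ u v, G.Adj u v → r u v → w.filter (fun z => z = u || z = v) = [u, v, u, v]) ∧
      (p.1 ≠ p.2 → ¬ G.Adj p.1 p.2 → ¬ Alternates w p.1 p.2) ∧ ((∀ v, v ∈ w) ∨ p.1 ≠ p.2) := by
    rintro ⟨x, y⟩
    by_cases h : x ≠ y ∧ ¬ G.Adj x y
    · obtain ⟨w, h1, h2⟩ := exists_word_separating G r hint ht hmem hpw h.1 h.2
      exact ⟨w, h1, fun _ _ => h2, Or.inr h.1⟩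
    · refine ⟨t ++ t, fun u v huv hr => ?_, fun h1 h2 => (h ⟨h1, h2⟩).elim, Or.inl (by simp [hmem])⟩
      rw [List.filter_append, filter_pair_of_pairwise ht hmem hpw huv.ne hr]
      rfl
  choose w hw1 hw2 hw3 using key
  refine ⟨(Finset.univ.toList.map w).flatten, fun v => ?_, fun x y hxy => ⟨fun h => ?_, fun h => ?_⟩⟩
  · rw [List.mem_flatten]
    exact ⟨w (v, v), by simp, (hw3 (v, v)).resolve_right (by simp) v⟩
  · by_contra hadj
    refine hw2 (x, y) hxy hadj (h.of_infix (List.infix_of_mem_flatten ?_))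
    exact List.mem_map_of_mem (by simp)
  · have main : ∀ u v, G.Adj u v → r u v →
        Alternates (Finset.univ.toList.map w).flatten u v := fun u v huv hr =>
      (filter_flatten_isChain huv.ne _ _ (by
        intro a ha
        obtain ⟨p, -, rfl⟩ := List.mem_map.mp ha
        exact hw1 p u v huv hr)).1
    rcases hcmp x y h with hr | hr
    · exact main x y h hr
    · exact (alternates_comm _ _ _).mpr (main y x h.symm hr)

/-- The order on naturals by residue modulo `p` in which the residue must grow by at least `K` when
going up and by at least `M` when going down. -/
def residueLE (p K M : ℕ) (a b : ℕ) : Prop :=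
  a % p ≤ b % p ∧ (a < b → a % p + K ≤ b % p) ∧ (b < a → a % p + M ≤ b % p)

theorem isPartialOrder_residueLE (p n : ℕ) {K M : ℕ} (hK : 0 < K) (hM : 0 < M) :
    IsPartialOrder (Fin n) (fun a b => residueLE p K M a b) where
  refl a := by simp [residueLE]
  trans a b c h1 h2 := by
    unfold residueLE at *
    omega
  antisymm a b h1 h2 := by
    unfold residueLE at *
    omega

/-- The residue of a difference of naturals, in terms of the residues of both. -/
theorem sub_mod_eq_ite {p a b : ℕ} (hp : 0 < p) (h : a ≤ b) :
    (b - a) % p = if a % p ≤ b % p then b % p - a % p else p + b % p - a % p := by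
  have ha := Nat.mod_lt a hp
  have hb := Nat.mod_lt b hp
  obtain ⟨c, rfl⟩ := Nat.exists_eq_add_of_le h
  have hc := Nat.mod_lt c hp
  rw [Nat.add_sub_cancel_left]
  have hmod : (a + c) % p = if p ≤ a % p + c % p then a % p + c % p - p else a % p + c % p :=
    Nat.add_mod_eq_ite
  split_ifs at hmod ⊢ <;> omega

/-- Adjacency in the Toeplitz graph in terms of residues. -/
theorem toeplitz_adj_iff (k l m : ℕ) (hm : 0 < m) (a b : ℕ)
    (hab : a % (k + l + m) ≤ b % (k + l + m)) :
    (k + 1 ≤ ((a : ℤ) - (b : ℤ)).natAbs % (k + l + m) ∧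
      ((a : ℤ) - (b : ℤ)).natAbs % (k + l + m) ≤ k + l) ↔
    (a < b ∧ a % (k + l + m) + (k + 1) ≤ b % (k + l + m) ∧
        b % (k + l + m) ≤ a % (k + l + m) + (k + l)) ∨
      (b < a ∧ a % (k + l + m) + m ≤ b % (k + l + m) ∧
        b % (k + l + m) + 1 ≤ a % (k + l + m) + (m + l)) := by
  have hp : 0 < k + l + m := by omega
  have ha := Nat.mod_lt a hp
  have hb := Nat.mod_lt b hp
  rcases lt_trichotomy a b with h | rfl | h
  · have e : ((a : ℤ) - (b : ℤ)).natAbs = b - a := by omega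
    rw [e, sub_mod_eq_ite hp h.le, if_pos hab]
    omega
  · simp
  · have e : ((a : ℤ) - (b : ℤ)).natAbs = a - b := by omega
    rw [e, sub_mod_eq_ite hp h.le]
    split_ifs <;> omega

/-- The Toeplitz graph G_n(0^k 1^l 0^m): distinct vertices are adjacent iff the
residue of |i − j| modulo k+l+m lies in {k+1,...,k+l}.  It is word-representable. -/
theorem toeplitz_0k1l0m_word_representable (k l m n : ℕ)
    (hk : 0 < k) (hl : 0 < l) (hm : 0 < m) (hn : 0 < n) :
    WordRepresentable (SimpleGraph.fromRel (fun i j : Fin n =>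
      k + 1 ≤ ((i : ℤ) - (j : ℤ)).natAbs % (k + l + m) ∧
      ((i : ℤ) - (j : ℤ)).natAbs % (k + l + m) ≤ k + l)) := by
  set G := SimpleGraph.fromRel (fun i j : Fin n =>
      k + 1 ≤ ((i : ℤ) - (j : ℤ)).natAbs % (k + l + m) ∧
      ((i : ℤ) - (j : ℤ)).natAbs % (k + l + m) ≤ k + l) with hG
  have hadj : ∀ i j : Fin n, (i : ℕ) % (k + l + m) ≤ (j : ℕ) % (k + l + m) →
      (G.Adj i j ↔
        ((i : ℕ) < j ∧ (i : ℕ) % (k + l + m) + (k + 1) ≤ (j : ℕ) % (k + l + m) ∧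
          (j : ℕ) % (k + l + m) ≤ (i : ℕ) % (k + l + m) + (k + l)) ∨
        ((j : ℕ) < i ∧ (i : ℕ) % (k + l + m) + m ≤ (j : ℕ) % (k + l + m) ∧
          (j : ℕ) % (k + l + m) + 1 ≤ (i : ℕ) % (k + l + m) + (m + l))) := fun i j h => by
    rw [← toeplitz_adj_iff k l m hm i j h, hG, SimpleGraph.fromRel_adj,
      ← Int.natAbs_neg ((j : ℤ) - i), neg_sub, or_self, and_iff_right_iff_imp]
    rintro h rfl
    simp at h
  have := isPartialOrder_residueLE (k + l + m) n k.succ_pos hm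
  refine wordRepresentable_of_isPartialOrder G
    (fun a b => residueLE (k + l + m) (k + 1) m a b) (fun u v h => ?_)
    (fun u v x y h hux hxy hyv hne => ?_)
  · rcases le_total ((u : ℕ) % (k + l + m)) ((v : ℕ) % (k + l + m)) with h' | h'
    · have := (hadj u v h').mp h
      unfold residueLE
      omega
    · have := (hadj v u h').mp h.symm
      unfold residueLE
      omega
  · unfold residueLE at *
    have h1 := (hadj u v (by omega)).mp h
    refine (hadj x y hxy.1).mpr ?_
    have : (x : ℕ) ≠ y := fun h => hne (Fin.ext h)
    omega
end

section
/- For any positive integers k, l and n, the Toeplitz graph G_n(0^k 1^l), in which distinct vertices i < j of {1,…,n} are adjacent if and only if the residue of j−i modulo k+l, taken in {1,…,k+l}, is at least k+1, is word-representable. -/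
/-- The representative of `d` modulo `m` taken in `{1, …, m}`. -/
def repMod (d m : ℕ) : ℕ := if d % m = 0 then m else d % m

/-- The Toeplitz graph `G_n(a₁ ⋯ a_m)` on vertex set `{1,…,n}` (encoded as `Fin n`,
with `v : Fin n` standing for the label `v+1`): vertices `i < j` are adjacent iff
`a r = true` where `r ∈ {1,…,m}` is congruent to `j - i` modulo `m`. -/
def toeplitzGraph (n m : ℕ) (a : ℕ → Bool) : SimpleGraph (Fin n) :=
  SimpleGraph.fromRel (fun i j => (i : ℕ) < (j : ℕ) ∧ a (repMod ((j : ℕ) - (i : ℕ)) m) = true)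

/-- The subword of `w` formed by the letters `x` and `y`. -/
def pairSubword {V : Type*} [DecidableEq V] (w : List V) (x y : V) : List V :=
  w.filter (fun z => z = x || z = y)

theorem alternates_iff {V : Type*} [DecidableEq V] (w : List V) (x y : V) :
    Alternates w x y ↔ (pairSubword w x y).IsChain (· ≠ ·) := Iff.rfl

theorem pairSubword_append {V : Type*} [DecidableEq V] (w₁ w₂ : List V) (x y : V) :
    pairSubword (w₁ ++ w₂) x y = pairSubword w₁ x y ++ pairSubword w₂ x y :=
  List.filter_append ..

theorem pairSubword_filter {V : Type*} [DecidableEq V] (w : List V) (p : V → Bool) (x y : V) :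
    pairSubword (w.filter p) x y = (pairSubword w x y).filter p :=
  List.filter_comm ..

/-- The word `xyxy⋯xy` with `N` copies of `xy`. -/
def pairPower {V : Type*} (x y : V) : ℕ → List V
  | 0 => []
  | N + 1 => x :: y :: pairPower x y N

theorem pairPower_append {V : Type*} (x y : V) (M N : ℕ) :
    pairPower x y M ++ pairPower x y N = pairPower x y (M + N) := by
  induction M with
  | zero => simp [pairPower]
  | succ M ih => rw [Nat.succ_add]; simp [pairPower, ih]

theorem isChain_cons_pairPower {V : Type*} {x y : V} (h : x ≠ y) (N : ℕ) :
    (y :: pairPower x y N).IsChain (· ≠ ·) := by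
  induction N with
  | zero => simp [pairPower]
  | succ N ih =>
    rw [pairPower, List.isChain_cons_cons, List.isChain_cons_cons]
    exact ⟨h.symm, h, ih⟩

theorem isChain_pairPower {V : Type*} {x y : V} (h : x ≠ y) (N : ℕ) :
    (pairPower x y N).IsChain (· ≠ ·) :=
  (isChain_cons_pairPower h N).tail

theorem exists_pairSubword_flatMap_eq_pairPower {V ι : Type*} [DecidableEq V] {x y : V}
    (L : List ι) (c : ι → List V) (h : ∀ i, ∃ N, pairSubword (c i) x y = pairPower x y N) :
    ∃ N, pairSubword (L.flatMap c) x y = pairPower x y N := by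
  induction L with
  | nil => exact ⟨0, rfl⟩
  | cons i L ih =>
    obtain ⟨N, hN⟩ := ih
    obtain ⟨M, hM⟩ := h i
    exact ⟨M + N, by rw [List.flatMap_cons, pairSubword_append, hM, hN, pairPower_append]⟩

/-- To represent `G` it suffices to find words, one for each pair of vertices, such that every
word reads `xyxy⋯xy` on every edge `xy` with `g x < g y`, and the word attached to a nonedge does
not alternate on it. -/
theorem wordRepresentable_of_pieces {V : Type*} [Fintype V] [DecidableEq V] (G : SimpleGraph V)
    (g : V → ℕ) (hg : g.Injective) (c : V → V → List V) (hmem : ∀ v, ∃ a b, v ∈ c a b)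
    (hedge : ∀ x y, g x < g y → G.Adj x y → ∀ a b, ∃ N, pairSubword (c a b) x y = pairPower x y N)
    (hnon : ∀ x y, g x < g y → ¬ G.Adj x y → ¬ Alternates (c x y) x y) :
    WordRepresentable G := by
  set L : List (V × V) := Finset.univ.toList
  have hL : ∀ i, i ∈ L := by simp [L]
  refine ⟨L.flatMap fun i => c i.1 i.2, fun v => ?_, ?_⟩
  · obtain ⟨a, b, h⟩ := hmem v
    exact List.mem_flatMap.2 ⟨(a, b), hL _, h⟩
  · have key : ∀ x y, g x < g y →
        (Alternates (L.flatMap fun i => c i.1 i.2) x y ↔ G.Adj x y) := by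
      intro x y hxy
      refine ⟨fun h => ?_, fun h => ?_⟩
      · by_contra hadj
        refine hnon x y hxy hadj ?_
        obtain ⟨s, t, hst⟩ := List.append_of_mem (hL (x, y))
        rw [hst, List.flatMap_append, List.flatMap_cons, alternates_iff, pairSubword_append,
          pairSubword_append] at h
        exact h.right_of_append.left_of_append
      · obtain ⟨N, hN⟩ := exists_pairSubword_flatMap_eq_pairPower L (fun i => c i.1 i.2)
          fun i => hedge x y hxy h i.1 i.2
        rw [alternates_iff, hN]
        exact isChain_pairPower (fun e => hxy.ne (congrArg g e)) N
    intro x y hxy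
    rcases lt_or_gt_of_ne (hg.ne hxy) with h | h
    · exact key x y h
    · rw [alternates_comm, G.adj_comm]
      exact key y x h

theorem exists_list_pairSubword_eq {V : Type*} [Fintype V] [DecidableEq V] (g : V → ℕ)
    (hg : g.Injective) :
    ∃ T : List V, (∀ v, v ∈ T) ∧ ∀ x y, g x < g y → pairSubword T x y = [x, y] := by
  set T := (Finset.univ : Finset V).toList.mergeSort (fun a b => decide (g a ≤ g b))
  have hperm : T.Perm (Finset.univ : Finset V).toList := List.mergeSort_perm ..
  have hmem : ∀ v, v ∈ T := fun v => hperm.mem_iff.2 (by simp)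
  have hnd : T.Nodup := hperm.nodup_iff.2 (Finset.nodup_toList _)
  have hsort : T.Pairwise fun a b => g a ≤ g b := by
    have := List.pairwise_mergeSort (le := fun a b : V => decide (g a ≤ g b))
      (fun a b c h₁ h₂ => by simp only [decide_eq_true_eq] at *; omega)
      (fun a b => by simp only [Bool.or_eq_true, decide_eq_true_eq]; omega)
      (Finset.univ : Finset V).toList
    simpa using this
  refine ⟨T, hmem, fun x y hxy => ?_⟩
  have hne : x ≠ y := fun e => hxy.ne (congrArg g e)
  refine List.Perm.eq_of_pairwise (le := fun a b => g a ≤ g b)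
    (fun a b _ _ h₁ h₂ => hg (le_antisymm h₁ h₂)) (hsort.filter _) (by simp [hxy.le]) ?_
  rw [pairSubword, List.perm_ext_iff_of_nodup (hnd.filter _) (by simp [hne])]
  intro z
  simp [hmem]

/-- The word `XZXYZY`, where `Z` is the complement of `X ∪ Y` and each block is listed in the
order of `T`. -/
def stretchWord {V : Type*} (T : List V) (X Y : V → Bool) : List V :=
  T.filter X ++ T.filter (fun v => !X v && !Y v) ++ T.filter X ++ T.filter Y ++
    T.filter (fun v => !X v && !Y v) ++ T.filter Y

/-- The word `TXZ`, where `Z` is the complement of `X` and each block is listed in the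
order of `T`. -/
def swapWord {V : Type*} (T : List V) (X : V → Bool) : List V :=
  T ++ T.filter X ++ T.filter (fun v => !X v)

theorem pairSubword_stretchWord {V : Type*} [DecidableEq V] {T : List V} {x y : V}
    {X Y : V → Bool} (hT : pairSubword T x y = [x, y]) (hdisj : ∀ v, X v → Y v → False)
    (hX : X y → X x) (hY : Y x → Y y) (hXY : X x → Y y → False) :
    pairSubword (stretchWord T X Y) x y = pairPower x y 2 := by
  have h₁ := hdisj x
  have h₂ := hdisj y
  simp only [stretchWord, pairSubword_append, pairSubword_filter, hT, pairPower]
  cases hXx : X x <;> cases hXy : X y <;> cases hYx : Y x <;> cases hYy : Y y <;> simp_all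

theorem not_alternates_stretchWord {V : Type*} [DecidableEq V] {T : List V} {x y : V}
    {X Y : V → Bool} (hT : pairSubword T x y = [x, y]) (hdisj : ∀ v, X v → Y v → False)
    (hx : X x) (hy : Y y) : ¬ Alternates (stretchWord T X Y) x y := by
  have h₁ := hdisj x
  have h₂ := hdisj y
  simp only [alternates_iff, stretchWord, pairSubword_append, pairSubword_filter, hT]
  simp_all

theorem pairSubword_swapWord {V : Type*} [DecidableEq V] {T : List V} {x y : V}
    {X : V → Bool} (hT : pairSubword T x y = [x, y]) (hX : X y → X x) :
    pairSubword (swapWord T X) x y = pairPower x y 2 := by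
  simp only [swapWord, pairSubword_append, pairSubword_filter, hT, pairPower]
  cases hXx : X x <;> cases hXy : X y <;> simp_all

theorem not_alternates_swapWord {V : Type*} [DecidableEq V] {T : List V} {x y : V}
    {X : V → Bool} (hT : pairSubword T x y = [x, y]) (hx : X x = false) (hy : X y) :
    ¬ Alternates (swapWord T X) x y := by
  simp only [alternates_iff, swapWord, pairSubword_append, pairSubword_filter, hT]
  simp_all

theorem repMod_le_iff {k l : ℕ} (hl : 0 < l) (d : ℕ) :
    (k + 1 ≤ repMod d (k + l) ∧ repMod d (k + l) ≤ k + l) ↔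
      d % (k + l) = 0 ∨ k < d % (k + l) := by
  have := Nat.mod_lt d (show 0 < k + l by omega)
  unfold repMod
  split_ifs <;> omega

theorem sub_mod_of_mod_le {i j m : ℕ} (hij : i ≤ j) (h : i % m ≤ j % m) (hm : 0 < m) :
    (j - i) % m = j % m - i % m := by
  have hj := Nat.mod_lt j hm
  have hq := Nat.mul_le_mul_left m (Nat.div_le_div_right (c := m) hij)
  have e : j - i = j % m - i % m + m * (j / m - i / m) := by
    rw [Nat.mul_sub]
    have := Nat.mod_add_div i m
    have := Nat.mod_add_div j m
    omega
  rw [e, Nat.add_mul_mod_self_left, Nat.mod_eq_of_lt (by omega)]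

theorem sub_mod_of_mod_lt {i j m : ℕ} (hij : i ≤ j) (h : j % m < i % m) (hm : 0 < m) :
    (j - i) % m = m - (i % m - j % m) := by
  have hi := Nat.mod_lt i hm
  have hq : i / m < j / m := by
    by_contra hcon
    have := Nat.mul_le_mul_left m (not_lt.1 hcon)
    have := Nat.mod_add_div i m
    have := Nat.mod_add_div j m
    omega
  have hq' := Nat.mul_le_mul_left m (Nat.succ_le_of_lt hq)
  have e : j - i = m - (i % m - j % m) + m * (j / m - (i / m + 1)) := by
    rw [Nat.mul_sub]
    have := Nat.mod_add_div i m
    have := Nat.mod_add_div j m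
    rw [Nat.mul_succ] at *
    omega
  rw [e, Nat.add_mul_mod_self_left, Nat.mod_eq_of_lt (by omega)]

theorem div_le_div_iff_of_mod_lt {i j m : ℕ} (h : i % m < j % m) (hm : 0 < m) :
    i / m ≤ j / m ↔ i < j := by
  have hj := Nat.mod_lt j hm
  have ei := Nat.mod_add_div i m
  have ej := Nat.mod_add_div j m
  refine ⟨fun hq => ?_, fun hij => Nat.div_le_div_right hij.le⟩
  have := Nat.mul_le_mul_left m hq
  omega

theorem toeplitzGraph_adj_iff {k l n : ℕ} (hl : 0 < l) {x y : Fin n}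
    (h : (x : ℕ) % (k + l) < y % (k + l) ∨
      (x : ℕ) % (k + l) = y % (k + l) ∧ (y : ℕ) / (k + l) < x / (k + l)) :
    (toeplitzGraph n (k + l) (fun r => decide (k + 1 ≤ r ∧ r ≤ k + l))).Adj x y ↔
      ((y : ℕ) % (k + l) < x % (k + l) + l ∨ (x : ℕ) / (k + l) ≤ y / (k + l)) ∧
      ((x : ℕ) % (k + l) + k < y % (k + l) ∨ (y : ℕ) / (k + l) < x / (k + l)) := by
  have hm : 0 < k + l := by omega
  have hxm := Nat.mod_lt (x : ℕ) hm
  have hym := Nat.mod_lt (y : ℕ) hm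
  simp only [toeplitzGraph, SimpleGraph.fromRel_adj, decide_eq_true_eq, repMod_le_iff hl,
    ne_eq, Fin.ext_iff]
  rcases h with h | ⟨h, hq⟩
  · have hdiv := div_le_div_iff_of_mod_lt h hm
    rcases lt_trichotomy (x : ℕ) y with hxy | hxy | hxy
    · rw [sub_mod_of_mod_le hxy.le h.le hm]
      omega
    · rw [hxy] at h
      omega
    · rw [sub_mod_of_mod_lt hxy.le h hm]
      omega
  · have hxy : (y : ℕ) < x := by
      by_contra hcon
      have := Nat.div_le_div_right (c := k + l) (not_lt.1 hcon)
      omega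
    rw [sub_mod_of_mod_le hxy.le h.ge hm]
    omega

/-- The rank of `i` when the numbers up to `n` are listed by increasing residue modulo `m` and,
within each residue class, by decreasing value. -/
def residueRank (m n i : ℕ) : ℕ := i % m * (n + 1) + (n - i / m)

theorem lt_of_residueRank_lt {m n i j : ℕ} (h : residueRank m n i < residueRank m n j) :
    i % m < j % m ∨ i % m = j % m ∧ j / m < i / m := by
  unfold residueRank at h
  have := Nat.zero_le (i / m)
  have := Nat.zero_le (j / m)
  rcases lt_trichotomy (i % m) (j % m) with hij | hij | hij
  · exact Or.inl hij
  · rw [hij] at h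
    omega
  · have := Nat.mul_le_mul_right (n + 1) (Nat.succ_le_of_lt hij)
    rw [Nat.succ_mul] at this
    omega

theorem residueRank_injective (m n : ℕ) :
    Function.Injective fun v : Fin n => residueRank m n v := by
  intro x y h
  have hx : (x : ℕ) / m ≤ n := (Nat.div_le_self _ _).trans x.2.le
  have hy : (y : ℕ) / m ≤ n := (Nat.div_le_self _ _).trans y.2.le
  simp only [residueRank] at h
  have := Nat.zero_le ((x : ℕ) / m)
  have := Nat.zero_le ((y : ℕ) / m)
  have hmod : (x : ℕ) % m = y % m := by
    rcases lt_trichotomy ((x : ℕ) % m) (y % m) with hij | hij | hij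
    · have := Nat.mul_le_mul_right (n + 1) (Nat.succ_le_of_lt hij)
      rw [Nat.succ_mul] at this
      omega
    · exact hij
    · have := Nat.mul_le_mul_right (n + 1) (Nat.succ_le_of_lt hij)
      rw [Nat.succ_mul] at this
      omega
  have hdiv : (x : ℕ) / m = y / m := by
    rw [hmod] at h
    omega
  rw [Fin.ext_iff, ← Nat.mod_add_div (x : ℕ) m, ← Nat.mod_add_div (y : ℕ) m, hmod, hdiv]

/-- The Toeplitz graph G_n(0^k 1^l): vertices i < j are adjacent iff the
representative of j − i modulo k+l taken in {1,...,k+l} is at least k+1.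
It is word-representable. -/
theorem toeplitz_0k1l_word_representable (k l n : ℕ)
    (hk : 0 < k) (hl : 0 < l) (hn : 0 < n) :
    WordRepresentable (toeplitzGraph n (k + l)
      (fun r => decide (k + 1 ≤ r ∧ r ≤ k + l))) := by
  have hm : 0 < k + l := by omega
  obtain ⟨T, hmem, hT⟩ := exists_list_pairSubword_eq _ (residueRank_injective (k + l) n)
  let s : Fin n → ℕ := fun v => v % (k + l)
  let p : Fin n → ℕ := fun v => v / (k + l)
  have hs : ∀ v, s v < k + l := fun v => Nat.mod_lt _ hm
  have hlt : ∀ x y : Fin n, residueRank (k + l) n x < residueRank (k + l) n y →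
      s x < s y ∨ s x = s y ∧ p y < p x := fun x y h => lt_of_residueRank_lt h
  have hadj : ∀ x y : Fin n, residueRank (k + l) n x < residueRank (k + l) n y →
      ((toeplitzGraph n (k + l) (fun r => decide (k + 1 ≤ r ∧ r ≤ k + l))).Adj x y ↔
        (s y < s x + l ∨ p x ≤ p y) ∧ (s x + k < s y ∨ p y < p x)) :=
    fun x y h => toeplitzGraph_adj_iff hl (hlt x y h)
  clear_value s p
  let X : Fin n → Fin n → Bool := fun a v => s v ≤ s a ∧ p a ≤ p v
  let Y : Fin n → Fin n → Bool := fun b v => s b ≤ s v ∧ p v ≤ p b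
  let D : Fin n → Fin n → Bool := fun b v =>
    s v + k < s b ∨ s v ≤ s b ∧ p b < p v ∨ s v = s b ∧ p v = p b
  have hdisj : ∀ a b, p b < p a → ∀ v, X a v → Y b v → False := by
    intro a b h v h₁ h₂
    simp only [X, Y, decide_eq_true_eq] at h₁ h₂
    omega
  refine wordRepresentable_of_pieces _ _ (residueRank_injective (k + l) n)
    (fun a b => if s a + l ≤ s b ∧ p b < p a then stretchWord T (X a) (Y b)
      else swapWord T (D b)) (fun v => ⟨v, v, ?_⟩) ?_ ?_
  · simp [swapWord, hmem]
  · intro x y hxy he a b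
    have hlt := hlt x y hxy
    rw [hadj x y hxy] at he
    have hsx := hs x
    have hsy := hs y
    have hsb := hs b
    refine ⟨2, ?_⟩
    split_ifs with hab
    · refine pairSubword_stretchWord (hT x y hxy) (hdisj a b hab.2) ?_ ?_ ?_ <;>
        simp only [X, Y, decide_eq_true_eq] <;> omega
    · refine pairSubword_swapWord (hT x y hxy) ?_
      simp only [D, decide_eq_true_eq]
      omega
  · intro x y hxy he
    have hlt := hlt x y hxy
    rw [hadj x y hxy] at he
    split_ifs with hab
    · exact not_alternates_stretchWord (hT x y hxy) (hdisj x y hab.2)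
        (by simp [X]) (by simp [Y])
    · refine not_alternates_swapWord (hT x y hxy) ?_ (by simp [D])
      simp only [D, decide_eq_false_iff_not]
      omega
end

section
/- Let k < m be positive integers with gcd(k,m) = 1. Then for every n, the Toeplitz graph on vertex set {1,…,n}, where distinct i < j are adjacent if and only if the representative of j−i modulo m in {1,…,m} is different from k and different from m, is word-representable. -/
namespace CyclicClasses

variable {m n : ℕ}

/-- The vertices of class `c`, in increasing order. -/
def ascending (f : Fin n → ZMod m) (c : ZMod m) : List (Fin n) :=
  (List.finRange n).filter (fun i => f i = c)

/-- The vertices of the classes `c` and `c + 1`, merged in decreasing order. -/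
def descendingPair (f : Fin n → ZMod m) (c : ZMod m) : List (Fin n) :=
  (List.finRange n).reverse.filter (fun i => f i = c ∨ f i = c + 1)

/-- A round visits the classes `c, c + 1, …, c + m = c` in this order,
with the first two classes merged in decreasing order. -/
def round (f : Fin n → ZMod m) (c : ZMod m) : List (Fin n) :=
  descendingPair f c ++ (List.range (m - 2)).flatMap (fun u : ℕ => ascending f (c + 2 + u)) ++
    ascending f c

/-- The concatenation of the first `t` rounds. -/
def rounds (f : Fin n → ZMod m) (t : ℕ) : List (Fin n) :=
  (List.range t).flatMap (fun s : ℕ => round f s)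

theorem filter_pair_finRange {i j : Fin n} (hij : i < j) :
    (List.finRange n).filter (fun z => z = i || z = j) = [i, j] := by
  refine List.Perm.eq_of_pairwise (le := (· < ·)) ?_ ?_ ?_ ?_
  · intro a b _ _ h1 h2
    exact absurd h1 h2.asymm
  · exact (List.pairwise_lt_finRange n).filter _
  · simpa using hij
  · rw [List.perm_ext_iff_of_nodup ((List.nodup_finRange n).filter _) (by simp [hij.ne])]
    simp

theorem filter_pair_ascending (f : Fin n → ZMod m) (c : ZMod m) {i j : Fin n} (hij : i < j) :
    (ascending f c).filter (fun z => z = i || z = j) =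
      [i, j].filter (fun z => f z = c) := by
  rw [ascending, List.filter_comm, filter_pair_finRange hij]

theorem filter_pair_descendingPair (f : Fin n → ZMod m) (c : ZMod m) {i j : Fin n}
    (hij : i < j) :
    (descendingPair f c).filter (fun z => z = i || z = j) =
      [j, i].filter (fun z => f z = c ∨ f z = c + 1) := by
  rw [descendingPair, List.filter_comm, List.filter_reverse, filter_pair_finRange hij]
  rfl

theorem exists_natCast_between [NeZero m] {c d : ZMod m} (hcd : c ≠ d) {p N : ℕ} (hpN : p < N)
    (hp : (p : ZMod m) = c) (hN : (N : ZMod m) = c) :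
    ∃ q, p < q ∧ q < N ∧ (q : ZMod m) = d := by
  have hdvd : m ∣ N - p := by
    rw [← ZMod.natCast_eq_zero_iff, Nat.cast_sub hpN.le, hp, hN, sub_self]
  have hle : m ≤ N - p := Nat.le_of_dvd (by omega) hdvd
  have hlt : (d - c).val < m := ZMod.val_lt _
  have hpos : 0 < (d - c).val := by
    rw [ZMod.val_pos]
    exact sub_ne_zero.mpr hcd.symm
  refine ⟨p + (d - c).val, by omega, by omega, ?_⟩
  simp [hp]

theorem isChain_filter_range_cast [NeZero m] {a b : ZMod m} (hab : a ≠ b) (N : ℕ) :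
    (((List.range N).map (fun u : ℕ => (u : ZMod m))).filter
      (fun c => c = a ∨ c = b)).IsChain (· ≠ ·) := by
  suffices h : (((List.range N).map (fun u : ℕ => (u : ZMod m))).filter
      (fun c => c = a ∨ c = b)).IsChain (· ≠ ·) ∧
      ∀ x ∈ (((List.range N).map (fun u : ℕ => (u : ZMod m))).filter
        (fun c => c = a ∨ c = b)).getLast?, ∃ p < N, (p : ZMod m) = x ∧
          ∀ q, p < q → q < N → (q : ZMod m) ≠ a ∧ (q : ZMod m) ≠ b from h.1
  induction N with
  | zero => simp
  | succ N ih =>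
    obtain ⟨hchain, hlast⟩ := ih
    rw [List.range_succ, List.map_append, List.filter_append]
    by_cases hN : (N : ZMod m) = a ∨ (N : ZMod m) = b
    · have hsingle : (List.map (fun u : ℕ => (u : ZMod m)) [N]).filter
          (fun c => c = a ∨ c = b) = [(N : ZMod m)] := by simp [hN]
      rw [hsingle]
      refine ⟨?_, ?_⟩
      · rw [List.isChain_append]
        refine ⟨hchain, List.isChain_singleton _, ?_⟩
        rintro x hx y hy rfl
        obtain ⟨p, hpN, hp, hq⟩ := hlast x hx
        have hxN : (N : ZMod m) = x := by simpa using hy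
        rcases hN with h | h
        · obtain ⟨q, h1, h2, h3⟩ :=
            exists_natCast_between hab hpN (hp.trans (hxN.symm.trans h)) h
          exact (hq q h1 h2).2 h3
        · obtain ⟨q, h1, h2, h3⟩ :=
            exists_natCast_between hab.symm hpN (hp.trans (hxN.symm.trans h)) h
          exact (hq q h1 h2).1 h3
      · intro x hx
        refine ⟨N, N.lt_succ_self, by simpa using hx, fun q h1 h2 => by omega⟩
    · have hnil : (List.map (fun u : ℕ => (u : ZMod m)) [N]).filter
          (fun c => c = a ∨ c = b) = [] := by simpa using hN
      rw [hnil, List.append_nil]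
      refine ⟨hchain, fun x hx => ?_⟩
      obtain ⟨p, hpN, hp, hq⟩ := hlast x hx
      refine ⟨p, by omega, hp, fun q h1 h2 => ?_⟩
      rcases Nat.lt_succ_iff_lt_or_eq.mp h2 with h | rfl
      · exact hq q h1 h
      · exact not_or.mp hN

section Alternating

variable (f : Fin n → ZMod m) {i j : Fin n}

theorem map_filter_pair_ascending (hij : i < j) (hne : f i ≠ f j) (c : ZMod m) :
    ((ascending f c).filter (fun z => z = i || z = j)).map f =
      [c].filter (fun c => c = f i ∨ c = f j) := by
  rw [filter_pair_ascending f c hij]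
  by_cases h1 : f i = c <;> by_cases h2 : f j = c <;> grind

theorem map_filter_pair_descendingPair [Fact (1 < m)] (hij : i < j) (hne : f i ≠ f j)
    (hsucc : f j ≠ f i + 1) (c : ZMod m) :
    ((descendingPair f c).filter (fun z => z = i || z = j)).map f =
      [c, c + 1].filter (fun c => c = f i ∨ c = f j) := by
  have hc : c + 1 ≠ c := by simp
  rw [filter_pair_descendingPair f c hij]
  by_cases h1 : f i = c <;> by_cases h2 : f j = c <;> by_cases h3 : f i = c + 1 <;>
    by_cases h4 : f j = c + 1 <;> grind

theorem map_filter_pair_round [Fact (1 < m)] (hij : i < j) (hne : f i ≠ f j)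
    (hsucc : f j ≠ f i + 1) (c : ZMod m) :
    ((round f c).filter (fun z => z = i || z = j)).map f =
      ((List.range (m + 1)).map (fun u : ℕ => c + u)).filter (fun c => c = f i ∨ c = f j) := by
  have hmid : ∀ l : List ℕ,
      ((l.flatMap (fun u : ℕ => ascending f (c + 2 + u))).filter
        (fun z => z = i || z = j)).map f =
      (l.map (fun u : ℕ => c + 2 + u)).filter (fun c => c = f i ∨ c = f j) := by
    intro l
    induction l with
    | nil => rfl
    | cons u l ih =>
      rw [List.flatMap_cons, List.filter_append, List.map_append, ih,
        map_filter_pair_ascending f hij hne, ← List.filter_append]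
      rfl
  have hrange : (List.range (m + 1)).map (fun u : ℕ => c + (u : ZMod m)) =
      [c, c + 1] ++ (List.range (m - 2)).map (fun u : ℕ => c + 2 + u) ++ [c] := by
    obtain ⟨p, rfl⟩ : ∃ p, m = 2 + p := Nat.exists_eq_add_of_le (Fact.out : 1 < m)
    rw [List.range_succ, List.range_add, Nat.add_sub_cancel_left]
    have h := ZMod.natCast_self (2 + p)
    simp [List.range_succ, add_assoc] at h ⊢
  rw [hrange, round]
  simp only [List.filter_append, List.map_append]
  rw [hmid, map_filter_pair_descendingPair f hij hne hsucc, map_filter_pair_ascending f hij hne]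

theorem map_filter_pair_rounds [Fact (1 < m)] (hij : i < j) (hne : f i ≠ f j)
    (hsucc : f j ≠ f i + 1) (t : ℕ) :
    ((rounds f t).filter (fun z => z = i || z = j)).map f =
      ((List.range (t * (m + 1))).map (fun u : ℕ => (u : ZMod m))).filter
        (fun c => c = f i ∨ c = f j) := by
  induction t with
  | zero => simp [rounds]
  | succ t ih =>
    have hsplit : rounds f (t + 1) = rounds f t ++ round f t := by
      simp [rounds, List.range_succ]
    rw [hsplit, List.filter_append, List.map_append, ih, map_filter_pair_round f hij hne hsucc,
      Nat.succ_mul, List.range_add (n := t * (m + 1)), List.map_append, List.filter_append, List.map_map]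
    congr 3
    funext u
    simp

theorem alternates_rounds [Fact (1 < m)] (hij : i < j) (hne : f i ≠ f j)
    (hsucc : f j ≠ f i + 1) (t : ℕ) : Alternates (rounds f t) i j := by
  have : NeZero m := ⟨by have := (Fact.out : 1 < m); omega⟩
  have h := isChain_filter_range_cast hne (t * (m + 1))
  rw [← map_filter_pair_rounds f hij hne hsucc, List.isChain_map] at h
  exact h.imp fun x y hxy hxy' => hxy (congrArg f hxy')

end Alternating

section NonAlternating

variable (f : Fin n → ZMod m) {i j : Fin n}

theorem round_infix_rounds [NeZero m] (c : ZMod m) : round f c <:+: rounds f m := by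
  refine List.infix_of_mem_flatten (List.mem_map.mpr ⟨c.val, ?_, ?_⟩)
  · exact List.mem_range.mpr (ZMod.val_lt c)
  · simp

theorem add_two_add_natCast_ne (c : ZMod m) {u : ℕ} (hu : u < m - 2) :
    c + 2 + u ≠ c ∧ c + 2 + u ≠ c + 1 := by
  constructor
  · intro h
    have h0 : ((2 + u : ℕ) : ZMod m) = 0 := by
      push_cast
      linear_combination h
    have := Nat.le_of_dvd (by omega) ((ZMod.natCast_eq_zero_iff _ _).mp h0)
    omega
  · intro h
    have h0 : ((1 + u : ℕ) : ZMod m) = 0 := by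
      push_cast
      linear_combination h
    have := Nat.le_of_dvd (by omega) ((ZMod.natCast_eq_zero_iff _ _).mp h0)
    omega

theorem not_alternates_rounds [NeZero m] (hij : i < j) (h : f j = f i ∨ f j = f i + 1) :
    ¬ Alternates (rounds f m) i j := by
  intro halt
  have hround := List.IsChain.infix halt
    ((round_infix_rounds f (f i)).filter (fun z => z = i || z = j))
  have hmid : ((List.range (m - 2)).flatMap (fun u : ℕ => ascending f (f i + 2 + u))).filter
      (fun z => z = i || z = j) = [] := by
    rw [List.filter_eq_nil_iff]
    intro z hz
    obtain ⟨u, hu, hz⟩ := List.mem_flatMap.mp hz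
    have hzc : f z = f i + 2 + u := by simpa [ascending] using hz
    have hne := add_two_add_natCast_ne (f i) (List.mem_range.mp hu)
    rw [← hzc] at hne
    simp only [Bool.or_eq_true, decide_eq_true_eq]
    rintro (rfl | rfl)
    · exact hne.1 rfl
    · exact h.elim hne.1 hne.2
  rw [round, List.filter_append, List.filter_append, hmid, List.append_nil,
    filter_pair_ascending f _ hij, filter_pair_descendingPair f _ hij] at hround
  simp [h] at hround

end NonAlternating

theorem mem_rounds [NeZero m] (f : Fin n → ZMod m) (i : Fin n) : i ∈ rounds f m := by
  refine (round_infix_rounds f (f i)).subset ?_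
  simp [round, ascending]

end CyclicClasses

theorem Alternates.symm {V : Type*} [DecidableEq V] {w : List V} {x y : V}
    (h : Alternates w x y) : Alternates w y x := by
  unfold Alternates at h ⊢
  simpa only [Bool.or_comm] using h

/-- If `i < j` are adjacent exactly when the class of `j` is neither the class of `i` nor the
cyclically next one, then the graph is word-representable. -/
theorem wordRepresentable_of_cyclic_classes {m n : ℕ} (hm : 1 < m) (f : Fin n → ZMod m)
    (G : SimpleGraph (Fin n))
    (hG : ∀ i j, i < j → (G.Adj i j ↔ f i ≠ f j ∧ f j ≠ f i + 1)) :
    WordRepresentable G := by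
  have : Fact (1 < m) := ⟨hm⟩
  have : NeZero m := ⟨by omega⟩
  have key : ∀ i j, i < j → (Alternates (CyclicClasses.rounds f m) i j ↔ G.Adj i j) := by
    intro i j hij
    rw [hG i j hij]
    refine ⟨fun h => ?_, fun h => CyclicClasses.alternates_rounds f hij h.1 h.2 m⟩
    by_contra hcon
    refine CyclicClasses.not_alternates_rounds f hij ?_ h
    by_contra hne
    exact hcon ⟨fun h => hne (Or.inl h.symm), fun h => hne (Or.inr h)⟩
  refine ⟨CyclicClasses.rounds f m, CyclicClasses.mem_rounds f, fun x y hxy => ?_⟩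
  rcases lt_or_gt_of_ne hxy with h | h
  · exact key x y h
  · rw [G.adj_comm, ← key y x h]
    exact ⟨Alternates.symm, Alternates.symm⟩

/-- For coprime k < m, the Toeplitz graph G_n(1^(k-1) 0 1^(m-k)), where i < j
are adjacent iff (j − i) % m ∉ {k, 0}, is word-representable. -/
theorem toeplitz_gap_coprime_word_representable (k m n : ℕ)
    (hk : 0 < k) (hkm : k < m) (hgcd : Nat.gcd k m = 1) :
    WordRepresentable (SimpleGraph.fromRel (fun i j : Fin n =>
      (i : ℕ) < (j : ℕ) ∧ ((j : ℕ) - (i : ℕ)) % m ≠ k ∧ ((j : ℕ) - (i : ℕ)) % m ≠ 0)) := by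
  have hunit : (k : ZMod m) * (k : ZMod m)⁻¹ = 1 := ZMod.coe_mul_inv_eq_one k hgcd
  refine wordRepresentable_of_cyclic_classes (by omega)
    (fun i => ((i : ℕ) : ZMod m) * (k : ZMod m)⁻¹) _ fun i j hij => ?_
  have hij' : (i : ℕ) < j := hij
  have hzero : ((j : ℕ) - (i : ℕ)) % m = 0 ↔
      ((i : ℕ) : ZMod m) * (k : ZMod m)⁻¹ = ((j : ℕ) : ZMod m) * (k : ZMod m)⁻¹ := by
    rw [← Nat.dvd_iff_mod_eq_zero, ← ZMod.natCast_eq_zero_iff, Nat.cast_sub hij'.le]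
    constructor <;> intro h
    · linear_combination (-(k : ZMod m)⁻¹) * h
    · linear_combination (-(k : ZMod m)) * h +
        (((i : ℕ) : ZMod m) - ((j : ℕ) : ZMod m)) * hunit
  have hgap : ((j : ℕ) - (i : ℕ)) % m = k ↔
      ((j : ℕ) : ZMod m) * (k : ZMod m)⁻¹ = ((i : ℕ) : ZMod m) * (k : ZMod m)⁻¹ + 1 := by
    have hmod : ((j : ℕ) - (i : ℕ)) % m = k ↔ (((j : ℕ) - (i : ℕ) : ℕ) : ZMod m) = k := by
      rw [ZMod.natCast_eq_natCast_iff', Nat.mod_eq_of_lt hkm]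
    rw [hmod, Nat.cast_sub hij'.le]
    constructor <;> intro h
    · linear_combination (k : ZMod m)⁻¹ * h + hunit
    · linear_combination (k : ZMod m) * h -
        (((j : ℕ) : ZMod m) - ((i : ℕ) : ZMod m)) * hunit
  rw [SimpleGraph.fromRel_adj]
  constructor
  · rintro ⟨-, h | h⟩
    · exact ⟨mt hzero.mpr h.2.2, mt hgap.mpr h.2.1⟩
    · exact absurd h.1 hij'.asymm
  · exact fun h => ⟨hij.ne, Or.inl ⟨hij', mt hgap.mp h.2, mt hzero.mp h.1⟩⟩
end

section
/- If a finite graph G admits a semi-transitive orientation then G is word-representable, and conversely every word-representable graph admits a semi-transitive orientation. -/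
/-- `r` is an orientation of the graph `G`: each edge receives exactly one
direction, and non-edges receive none. -/
def IsOrientation {V : Type*} (r : V → V → Prop) (G : SimpleGraph V) : Prop :=
  (∀ x y : V, G.Adj x y ↔ (r x y ∨ r y x)) ∧ ∀ x y : V, ¬(r x y ∧ r y x)

/-- `r` is semi-transitive: it is acyclic (its transitive closure is irreflexive),
and for any directed path v₁ → v₂ → ⋯ → v_k, if the edge from v₁ to v_k is
present then all edges vᵢ → vⱼ for i < j are present. -/
def IsSemiTransitive {V : Type*} (r : V → V → Prop) : Prop :=
  Irreflexive (Relation.TransGen r) ∧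
  ∀ l : List V, l.Chain' r → ∀ hl : l ≠ [],
    r (l.head hl) (l.getLast hl) →
      ∀ i j : Fin l.length, i < j → r (l.get i) (l.get j)

/-- Every prefix of `w` contains at least as many `x` as `y`, and at most one more:
the letters `x` and `y` alternate in `w`, and `x` comes first. -/
def Leads {V : Type*} [DecidableEq V] (w : List V) (x y : V) : Prop :=
  ∀ p, p <+: w → p.count y ≤ p.count x ∧ p.count x ≤ p.count y + 1

theorem leads_cons {V : Type*} [DecidableEq V] {w : List V} {a x y : V} :
    Leads (a :: w) x y ↔ ∀ p, p <+: w →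
      (a :: p).count y ≤ (a :: p).count x ∧ (a :: p).count x ≤ (a :: p).count y + 1 := by
  constructor
  · intro h p hp
    exact h _ ((List.prefix_cons_inj a).2 hp)
  · intro h p hp
    rcases List.prefix_cons_iff.1 hp with rfl | ⟨t, rfl, ht⟩
    · simp
    · exact h t ht

theorem leads_iff_isChain {V : Type*} [DecidableEq V] {x y : V} (hxy : x ≠ y) (w : List V) :
    (Leads w x y ↔ (y :: w.filter (fun z => z = x || z = y)).IsChain (· ≠ ·)) ∧
    (Leads w y x ↔ (x :: w.filter (fun z => z = x || z = y)).IsChain (· ≠ ·)) := by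
  induction w with
  | nil => simp [Leads]
  | cons a w ih =>
    have hlead : ∀ {u v : V}, u ≠ v → (Leads (u :: w) u v ↔ Leads w v u) := by
      intro u v huv
      rw [leads_cons]
      refine forall₂_congr fun p _ => ?_
      simp only [List.count_cons_self, List.count_cons_of_ne huv]
      omega
    have hnot : ∀ {u v : V}, u ≠ v → ¬ Leads (v :: w) u v := by
      intro u v huv h
      have := (h [v] (by simp)).1
      simp [huv.symm] at this
    by_cases hax : a = x
    · subst hax
      simp [hlead hxy, hnot hxy.symm, ih.2, hxy.symm]
    · by_cases hay : a = y
      · subst hay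
        simp [hlead hxy.symm, hnot hxy, ih.1, hxy]
      · have hskip : ∀ {u v : V}, a ≠ u → a ≠ v → (Leads (a :: w) u v ↔ Leads w u v) := by
          intro u v hu hv
          rw [leads_cons]
          simp only [List.count_cons_of_ne hu, List.count_cons_of_ne hv, Leads]
        simpa [hskip hax hay, hskip hay hax, hax, hay] using ih

theorem alternates_iff_leads {V : Type*} [DecidableEq V] {x y : V} (hxy : x ≠ y) (w : List V) :
    Alternates w x y ↔ Leads w x y ∨ Leads w y x := by
  rw [(leads_iff_isChain hxy w).1, (leads_iff_isChain hxy w).2]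
  unfold Alternates
  have hmem : ∀ z ∈ w.filter (fun z => z = x || z = y), z = x ∨ z = y := by
    intro z hz
    simpa using (List.mem_filter.1 hz).2
  generalize w.filter (fun z => z = x || z = y) = l at hmem
  cases l with
  | nil => simp [List.Chain']
  | cons a l =>
    rcases hmem a (by simp) with rfl | rfl
    · simp [List.Chain', hxy.symm]
    · simp [List.Chain', hxy]

theorem eq_of_leads_of_leads {V : Type*} [DecidableEq V] {w : List V} {x y : V} (hx : x ∈ w)
    (h : ∀ p, p <+: w → p.count x = p.count y) : x = y := by
  obtain ⟨s, t, rfl⟩ := List.append_of_mem hx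
  by_contra hxy
  have h1 := h s (by simp)
  have h2 := h (s ++ [x]) ⟨t, by simp⟩
  simp [List.count_append, hxy] at h2
  omega

theorem leads_append_iff {V : Type*} [DecidableEq V] {u w : List V} {x y : V}
    (h : u.count x = u.count y) : Leads (u ++ w) x y ↔ Leads u x y ∧ Leads w x y := by
  constructor
  · refine fun H => ⟨fun p hp => H p (hp.trans (List.prefix_append _ _)), fun p hp => ?_⟩
    have := H (u ++ p) ((List.prefix_append_right_inj u).2 hp)
    simp only [List.count_append] at this
    omega
  · rintro ⟨h1, h2⟩ p hp
    rcases List.prefix_or_prefix_of_prefix hp (List.prefix_append u w) with hp' | ⟨q, rfl⟩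
    · exact h1 p hp'
    · have := h2 q ((List.prefix_append_right_inj u).1 hp)
      simp only [List.count_append]
      omega

theorem WordRepresentable.exists_semiTransitive {V : Type*} [DecidableEq V] {G : SimpleGraph V}
    (h : WordRepresentable G) : ∃ r : V → V → Prop, IsOrientation r G ∧ IsSemiTransitive r := by
  obtain ⟨w, hw, hG⟩ := h
  have hle : ∀ {x y}, Relation.ReflTransGen (fun x y => x ≠ y ∧ Leads w x y) x y →
      ∀ p, p <+: w → p.count y ≤ p.count x := by
    intro x y hxy
    induction hxy with
    | refl => simp
    | tail _ hbc ih => exact fun p hp => (hbc.2 p hp).1.trans (ih p hp)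
  refine ⟨fun x y => x ≠ y ∧ Leads w x y, ⟨fun x y => ?_, ?_⟩, ?_, ?_⟩
  · by_cases hxy : x = y
    · simp [hxy]
    · rw [← hG x y hxy, alternates_iff_leads hxy]
      simp [hxy, Ne.symm hxy]
  · rintro x y ⟨⟨hxy, h1⟩, -, h2⟩
    exact hxy (eq_of_leads_of_leads (hw x)
      fun p hp => le_antisymm (h2 p hp).1 (h1 p hp).1)
  · intro x hx
    obtain ⟨y, hxy, hyx⟩ := Relation.TransGen.head'_iff.1 hx
    exact hxy.1 (eq_of_leads_of_leads (hw x)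
      fun p hp => le_antisymm (hle hyx p hp) (hxy.2 p hp).1)
  · intro l hl hne hends i j hij
    have hchain : l.IsChain (fun x y => x ≠ y ∧ Leads w x y) := hl
    have hpw : l.Pairwise (Relation.TransGen fun x y => x ≠ y ∧ Leads w x y) :=
      List.isChain_iff_pairwise.1 (hchain.imp fun _ _ => Relation.TransGen.single)
    have hmono : ∀ {a b : Fin l.length}, a ≤ b → ∀ p, p <+: w →
        p.count (l.get b) ≤ p.count (l.get a) := by
      intro a b hab
      rcases hab.eq_or_lt with rfl | hab
      · simp
      · exact hle (List.pairwise_iff_get.1 hpw a b hab).to_reflTransGen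
    have hpos := List.length_pos_of_ne_nil hne
    have hhead : l.head hne = l.get ⟨0, hpos⟩ := by simp [List.head_eq_getElem]
    have hlast : l.getLast hne = l.get ⟨l.length - 1, by omega⟩ := by
      simp [List.getLast_eq_getElem]
    have hlead : Leads w (l.get i) (l.get j) := by
      intro p hp
      have h1 := hmono hij.le p hp
      have h2 := hmono (a := ⟨0, hpos⟩) (b := i) (Fin.mk_le_of_le_val (Nat.zero_le _)) p hp
      have h3 := hmono (a := j) (b := ⟨l.length - 1, by omega⟩)
        (Fin.le_def.2 (Nat.le_sub_one_of_lt j.2)) p hp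
      have h4 := (hends.2 p hp).2
      rw [hhead, hlast] at h4
      omega
    refine ⟨fun heq => ?_, hlead⟩
    have := List.pairwise_iff_get.1 hpw i j hij
    rw [heq] at this
    obtain ⟨y, hxy, hyx⟩ := Relation.TransGen.head'_iff.1 this
    exact hxy.1 (eq_of_leads_of_leads (hw _)
      fun p hp => le_antisymm (hle hyx p hp) (hxy.2 p hp).1)

theorem exists_linear_extension_list_s15 {P : Type*} [Fintype P] {R : P → P → Prop}
    (hR : Irreflexive (Relation.TransGen R)) :
    ∃ L : List P, (∀ a, a ∈ L) ∧ L.Nodup ∧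
      ∀ q, q <+: L → ∀ a b, R a b → b ∈ q → a ∈ q := by
  classical
  have : IsPartialOrder P (Relation.ReflTransGen R) :=
    { refl := fun _ => .refl
      trans := fun _ _ _ => .trans
      antisymm := fun a b hab hba => by
        rcases Relation.reflTransGen_iff_eq_or_transGen.1 hab with h | h
        · exact h.symm
        · exact (hR a (h.trans_left hba)).elim }
  obtain ⟨s, hs, hle⟩ := extend_partialOrder (Relation.ReflTransGen R)
  refine ⟨Finset.univ.sort s, by simp, Finset.sort_nodup _ _, ?_⟩
  rintro q ⟨t, ht⟩ a b hab hb
  have hmem : a ∈ q ++ t := by simp [ht]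
  rcases List.mem_append.1 hmem with ha | ha
  · exact ha
  have hpw : (q ++ t).Pairwise s := ht ▸ Finset.pairwise_sort _ _
  have hba := (List.pairwise_append.1 hpw).2.2 b hb a ha
  have : a = b := antisymm_of s (hle _ _ (.single hab)) hba
  exact this ▸ hb

theorem count_map_fst {V : Type*} [DecidableEq V] (a : V) (q : List (V × Bool)) :
    (q.map Prod.fst).count a = q.count (a, false) + q.count (a, true) := by
  induction q with
  | nil => rfl
  | cons c q ih =>
    obtain ⟨c, _ | _⟩ := c <;> by_cases h : c = a <;>
      simp [ih, h] <;> omega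

/-- The order constraints on the two occurrences `(v, false)`, `(v, true)` of the letters `v`
in a word in which `a` and `b` alternate, starting with `a`, whenever `r a b`. -/
inductive OccurrenceRel {V : Type*} (r : V → V → Prop) : V × Bool → V × Bool → Prop
  | level {a b : V} (i : Bool) : r a b → OccurrenceRel r (a, i) (b, i)
  | cross {a b : V} : r a b → OccurrenceRel r (b, false) (a, true)
  | self (a : V) : OccurrenceRel r (a, false) (a, true)

theorem irreflexive_transGen_occurrenceRel {V : Type*} {r : V → V → Prop}
    (hr : Irreflexive (Relation.TransGen r)) :
    Irreflexive (Relation.TransGen (OccurrenceRel r)) := by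
  have key : ∀ {p q}, Relation.TransGen (OccurrenceRel r) p q →
      p.2 < q.2 ∨ p.2 = q.2 ∧ Relation.TransGen r p.1 q.1 := by
    intro p q h
    have hstep : ∀ {p q}, OccurrenceRel r p q → p.2 < q.2 ∨ p.2 = q.2 ∧ r p.1 q.1 := by
      rintro _ _ (⟨i, h⟩ | h | a) <;> simp_all
    induction h with
    | single h => exact (hstep h).imp id (And.imp id .single)
    | tail _ h ih =>
      rcases hstep h with h | ⟨h, h'⟩
      · rcases ih with ih | ⟨ih, -⟩
        · exact .inl (ih.trans h)
        · exact .inl (ih ▸ h)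
      · rcases ih with ih | ⟨ih, ih'⟩
        · exact .inl (h ▸ ih)
        · exact .inr ⟨ih.trans h, ih'.tail h'⟩
  intro p hp
  rcases key hp with h | ⟨-, h⟩
  · exact lt_irrefl _ h
  · exact hr _ h

theorem reflTransGen_occurrenceRel {V : Type*} {r : V → V → Prop} {y : V} {q : V × Bool}
    (h : Relation.ReflTransGen (OccurrenceRel r) (y, false) q) :
    (q.2 = false → Relation.ReflTransGen r y q.1) ∧
    (q.2 = true → ∃ c d, Relation.ReflTransGen r y c ∧ (d = c ∨ r d c) ∧
      Relation.ReflTransGen r d q.1) := by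
  induction h with
  | refl => exact ⟨fun _ => .refl, by simp⟩
  | tail _ h ih =>
    cases h with
    | level i h =>
      refine ⟨fun hi => (ih.1 hi).tail h, fun hi => ?_⟩
      obtain ⟨c, d, h1, h2, h3⟩ := ih.2 hi
      exact ⟨c, d, h1, h2, h3.tail h⟩
    | cross h => exact ⟨by simp, fun _ => ⟨_, _, ih.1 rfl, .inr h, .refl⟩⟩
    | self => exact ⟨by simp, fun _ => ⟨_, _, ih.1 rfl, .inl rfl, .refl⟩⟩

theorem irreflexive_transGen_insert {P : Type*} {R : P → P → Prop}
    (hR : Irreflexive (Relation.TransGen R)) {u v : P} (h : ¬ Relation.ReflTransGen R v u) :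
    Irreflexive (Relation.TransGen fun a b => R a b ∨ a = u ∧ b = v) := by
  have key : ∀ {a b}, Relation.TransGen (fun a b => R a b ∨ a = u ∧ b = v) a b →
      Relation.TransGen R a b ∨
        Relation.ReflTransGen R a u ∧ Relation.ReflTransGen R v b := by
    intro a b hab
    induction hab with
    | single h =>
      rcases h with h | ⟨rfl, rfl⟩
      · exact .inl (.single h)
      · exact .inr ⟨.refl, .refl⟩
    | tail _ h ih =>
      rcases h with h | ⟨rfl, rfl⟩
      · exact ih.imp (·.tail h) (And.imp id (·.tail h))
      · exact .inr ⟨ih.elim (·.to_reflTransGen) (·.1), .refl⟩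
  intro a ha
  rcases key ha with h' | ⟨h1, h2⟩
  · exact hR a h'
  · exact h (h2.trans h1)

theorem exists_word_of_occurrenceRel_le {V : Type*} [Fintype V] [DecidableEq V]
    {r : V → V → Prop} {S : V × Bool → V × Bool → Prop}
    (hS : Irreflexive (Relation.TransGen S)) (hle : ∀ p q, OccurrenceRel r p q → S p q) :
    ∃ w : List V, (∀ v, w.count v = 2) ∧ (∀ a b, r a b → Leads w a b) ∧
      (∀ x y, S (x, true) (y, false) → ¬ Leads w x y) ∧
      ∀ x y, S (y, false) (x, false) → ¬ Leads w x y := by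
  obtain ⟨L, hmem, hnd, hdown⟩ := exists_linear_extension_list_s15 hS
  have hsplit : ∀ a b, S a b → ∃ q, q <+: L ∧ a ∈ q ∧ b ∉ q := by
    intro a b hab
    obtain ⟨s, t, hst⟩ := List.append_of_mem (hmem a)
    refine ⟨s ++ [a], ⟨t, by simp [hst]⟩, by simp, fun hb => ?_⟩
    rcases List.mem_append.1 hb with hb | hb
    · have ha := hdown s ⟨_, hst.symm⟩ a b hab hb
      rw [hst, List.nodup_append] at hnd
      exact hnd.2.2 a ha a (by simp) rfl
    · rw [List.mem_singleton.1 hb] at hab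
      exact hS a (.single hab)
  have hmap : ∀ q, q <+: L → (q.map Prod.fst) <+: (L.map Prod.fst) := by
    rintro q ⟨t, rfl⟩
    simp
  have hone : ∀ q, q <+: L → ∀ c, c ∈ q → q.count c = 1 := fun q hq c hc =>
    List.count_eq_one_of_mem (hq.sublist.nodup hnd) hc
  have hself : ∀ q, q <+: L → ∀ a, (a, true) ∈ q → (a, false) ∈ q := fun q hq a =>
    hdown q hq _ _ (hle _ _ (.self a))
  refine ⟨L.map Prod.fst, fun v => ?_, fun a b hab p hp => ?_, fun x y hxy H => ?_,
    fun x y hxy H => ?_⟩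
  · rw [count_map_fst, hone L List.prefix_rfl _ (hmem _), hone L List.prefix_rfl _ (hmem _)]
  · obtain ⟨t, ht⟩ := hp
    obtain ⟨q, q', rfl, rfl, rfl⟩ := List.map_eq_append_iff.1 ht.symm
    have hq : q <+: q ++ q' := List.prefix_append _ _
    have hcount : ∀ c, q.count c = if c ∈ q then 1 else 0 := by
      intro c
      split_ifs with hc
      · exact hone q hq c hc
      · exact List.count_eq_zero_of_not_mem hc
    have h1 := hdown q hq _ _ (hle _ _ (.level false hab))
    have h2 := hdown q hq _ _ (hle _ _ (.level true hab))
    have h3 := hdown q hq _ _ (hle _ _ (.cross hab))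
    have h4 := hself q hq a
    have h5 := hself q hq b
    simp only [count_map_fst, hcount]
    split_ifs <;> grind
  · obtain ⟨q, hq, hx, hy⟩ := hsplit _ _ hxy
    have := (H _ (hmap q hq)).2
    rw [count_map_fst, count_map_fst, hone q hq _ hx, hone q hq _ (hself q hq _ hx),
      List.count_eq_zero_of_not_mem hy,
      List.count_eq_zero_of_not_mem (mt (hself q hq y) hy)] at this
    omega
  · obtain ⟨q, hq, hy, hx⟩ := hsplit _ _ hxy
    have := (H _ (hmap q hq)).1
    rw [count_map_fst, count_map_fst, hone q hq _ hy, List.count_eq_zero_of_not_mem hx,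
      List.count_eq_zero_of_not_mem (mt (hself q hq x) hx)] at this
    omega

theorem List.IsChain.exists_append {V : Type*} {r : V → V → Prop} {l : List V} {x b : V}
    (hl : l.IsChain r) (hx : l.getLast? = some x) (h : Relation.ReflTransGen r x b) :
    ∃ t, (l ++ t).IsChain r ∧ (l ++ t).getLast? = some b := by
  induction h with
  | refl => exact ⟨[], by simpa using hl, by simpa using hx⟩
  | @tail c d _ hcd ih =>
    obtain ⟨t, ht, hc⟩ := ih
    refine ⟨t ++ [d], ?_, by simp [← List.append_assoc]⟩
    rw [← List.append_assoc, List.isChain_append]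
    exact ⟨ht, by simp, by simpa [hc] using hcd⟩

theorem IsSemiTransitive.rel_of_transGen {V : Type*} {r : V → V → Prop} (hr : IsSemiTransitive r)
    {a x y b : V} (hax : Relation.ReflTransGen r a x) (hxy : Relation.TransGen r x y)
    (hyb : Relation.ReflTransGen r y b) (hab : r a b) : r x y := by
  obtain ⟨s, hs, hsx⟩ := (List.isChain_singleton (R := r) a).exists_append rfl hax
  obtain ⟨z, hxz, hzy⟩ := Relation.TransGen.tail'_iff.1 hxy
  obtain ⟨t, ht, htz⟩ := hs.exists_append hsx hxz
  have hty : ([a] ++ s ++ t ++ [y]).IsChain r := by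
    rw [List.isChain_append, htz]
    exact ⟨ht, by simp, by simpa using hzy⟩
  obtain ⟨u, hu, hub⟩ := hty.exists_append List.getLast?_concat hyb
  have hne : [a] ++ s ++ t ++ [y] ++ u ≠ [] := by simp
  have hpw : ([a] ++ s ++ t ++ [y] ++ u).Pairwise r := by
    refine List.pairwise_iff_get.2 (hr.2 _ hu hne ?_)
    rw [List.getLast?_eq_some_getLast hne, Option.some_inj] at hub
    rw [hub]
    simpa using hab
  rw [List.append_assoc, List.append_assoc, List.pairwise_append] at hpw
  exact hpw.2.2 x (List.mem_of_getLast? hsx) y (by simp)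

theorem IsSemiTransitive.exists_word_not_leads {V : Type*} [Fintype V] [DecidableEq V]
    {r : V → V → Prop} (hr : IsSemiTransitive r) {x y : V} (hne : x ≠ y) (hxy : ¬ r x y) :
    ∃ w : List V, (∀ v, w.count v = 2) ∧ (∀ a b, r a b → Leads w a b) ∧ ¬ Leads w x y := by
  have hirr := irreflexive_transGen_occurrenceRel hr.1
  by_cases h : Relation.TransGen r x y
  · obtain ⟨w, h1, h2, h3, -⟩ := exists_word_of_occurrenceRel_le (r := r)
      (irreflexive_transGen_insert hirr (u := (x, true)) (v := (y, false)) fun H => by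
        obtain ⟨c, d, hyc, hdc, hdx⟩ := (reflTransGen_occurrenceRel H).2 rfl
        rcases hdc with rfl | hdc
        · exact hr.1 x ((h.trans_left hyc).trans_left hdx)
        · exact hxy (hr.rel_of_transGen hdx h hyc hdc))
      (fun _ _ => .inl)
    exact ⟨w, h1, h2, h3 x y (.inr ⟨rfl, rfl⟩)⟩
  · obtain ⟨w, h1, h2, -, h3⟩ := exists_word_of_occurrenceRel_le (r := r)
      (irreflexive_transGen_insert hirr (u := (y, false)) (v := (x, false)) fun H => by
        rcases Relation.reflTransGen_iff_eq_or_transGen.1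
          ((reflTransGen_occurrenceRel H).1 rfl) with h' | h'
        · exact hne h'.symm
        · exact h h')
      (fun _ _ => .inl)
    exact ⟨w, h1, h2, h3 x y (.inr ⟨rfl, rfl⟩)⟩

theorem IsSemiTransitive.exists_word {V : Type*} [Fintype V] [DecidableEq V]
    {r : V → V → Prop} (hr : IsSemiTransitive r) :
    ∃ w : List V, (∀ v, v ∈ w) ∧ (∀ a b, r a b → Leads w a b) ∧
      ∀ x y, x ≠ y → ¬ r x y → ¬ Leads w x y := by
  have key : ∀ l : List (V × V), ∃ w : List V, (∀ v, v ∈ w) ∧ (∀ u v, w.count u = w.count v) ∧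
      (∀ a b, r a b → Leads w a b) ∧
      ∀ p ∈ l, p.1 ≠ p.2 → ¬ r p.1 p.2 → ¬ Leads w p.1 p.2 := by
    intro l
    induction l with
    | nil =>
      obtain ⟨w, h1, h2, -⟩ := exists_word_of_occurrenceRel_le
        (irreflexive_transGen_occurrenceRel hr.1) fun _ _ => id
      exact ⟨w, fun v => List.count_pos_iff.1 (by simp [h1]), by simp [h1], h2, by simp⟩
    | cons p l ih =>
      obtain ⟨w, h1, h2, h3, h4⟩ := ih
      by_cases hp : p.1 ≠ p.2 ∧ ¬ r p.1 p.2
      · obtain ⟨w', h1', h2', h3'⟩ := hr.exists_word_not_leads hp.1 hp.2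
        refine ⟨w ++ w', fun v => List.mem_append_left _ (h1 v), fun u v => ?_,
          fun a b hab => (leads_append_iff (h2 a b)).2 ⟨h3 a b hab, h2' a b hab⟩, ?_⟩
        · rw [List.count_append, List.count_append, h2 u v, h1', h1']
        · intro q hq hne hrq H
          rw [leads_append_iff (h2 _ _)] at H
          rcases List.mem_cons.1 hq with rfl | hq
          · exact h3' H.2
          · exact h4 q hq hne hrq H.1
      · refine ⟨w, h1, h2, h3, fun q hq hne hrq => ?_⟩
        rcases List.mem_cons.1 hq with rfl | hq
        · exact (hp ⟨hne, hrq⟩).elim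
        · exact h4 q hq hne hrq
  obtain ⟨w, h1, -, h3, h4⟩ := key Finset.univ.toList
  exact ⟨w, h1, h3, fun x y => h4 (x, y) (by simp)⟩

/-- A finite graph is word-representable if and only if it admits a
semi-transitive orientation. -/
theorem word_representable_iff_semi_transitive {V : Type*} [Fintype V] [DecidableEq V]
    (G : SimpleGraph V) :
    (∃ r : V → V → Prop, IsOrientation r G ∧ IsSemiTransitive r) ↔
      WordRepresentable G := by
  refine ⟨?_, WordRepresentable.exists_semiTransitive⟩
  rintro ⟨r, hor, hr⟩
  obtain ⟨w, hmem, hlead, hnot⟩ := hr.exists_word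
  refine ⟨w, hmem, fun x y hxy => ?_⟩
  rw [alternates_iff_leads hxy, hor.1 x y]
  refine or_congr ⟨fun h => ?_, hlead x y⟩ ⟨fun h => ?_, hlead y x⟩
  · exact by_contra fun hn => hnot x y hxy hn h
  · exact by_contra fun hn => hnot y x hxy.symm hn h
end
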